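/- Fix a prime power q, k ≥ 1, and j ≥ 0. For a uniformly random monic square-free polynomial f of degree n over F_q, lim_{n→∞} E[binom(X_k(f), j)] = binom(M_k(q), j) · (1/(1+q^k))^j, where X_k(f) is the number of degree-k irreducible factors of f and M_k(q) is the number of monic irreducible polynomials of degree k over F_q. -/

import Mathlib

open Filter Topology
open scoped Classical

/-- `Xdeg f k` is the number of monic irreducible factors of degree `k` of `f`
(counted without multiplicity when `f` is squarefree). -/
noncomputable def Xdeg {F : Type*} [Field F] (f : Polynomial F) (k : ℕ) : ℕ :=
  Multiset.card
    ((UniqueFactorizationMonoid.normalizedFactors f).filter fun g => g.natDegree = k)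

open Polynomial

lemma rec_tendsto (u : ℕ → ℝ) (c L B : ℝ) (k : ℕ) (hc0 : 0 ≤ c) (hc : c ≤ 1 / 2)
    (hB : ∀ n, |u n| ≤ B)
    (h : Tendsto (fun n => u (n + k) + c * u n) atTop (𝓝 L)) :
    Tendsto u atTop (𝓝 (L / (1 + c))) := by
  have hc1 : (1 + c) ≠ 0 := by positivity
  set l := L / (1 + c) with hl
  have hL : L = l + c * l := by rw [hl]; field_simp
  set C := B + |l| + 1 with hC
  have hB0 : 0 ≤ B := (abs_nonneg _).trans (hB 0)
  have hCpos : 0 < C := by positivity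
  have key : ∀ m : ℕ, ∀ᶠ n in atTop, |u n - l| ≤ C * (3 / 4) ^ m := by
    intro m
    induction m with
    | zero =>
      refine Eventually.of_forall fun n => ?_
      have := abs_sub (u n) l
      have := hB n
      simp only [pow_zero, mul_one]
      linarith
    | succ m ih =>
      have hx : 0 < C * (3 / 4) ^ m := by positivity
      set x := C * (3 / 4) ^ m with hxd
      have h1 := (Metric.tendsto_atTop.1 h) (x / 4) (by positivity)
      obtain ⟨N1, h1⟩ := h1
      obtain ⟨N2, h2⟩ := eventually_atTop.1 ih
      refine eventually_atTop.2 ⟨max N1 N2 + k, fun n hn => ?_⟩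
      obtain ⟨a, rfl⟩ : ∃ a, n = a + k := ⟨n - k, by omega⟩
      have ha : max N1 N2 ≤ a := by omega
      have e1 := h1 a ((le_max_left _ _).trans ha)
      have e2 := h2 a ((le_max_right _ _).trans ha)
      rw [Real.dist_eq, hL] at e1
      have e3 : u (a + k) - l = (u (a + k) + c * u a - (l + c * l)) - c * (u a - l) := by ring
      have e4 := abs_sub (u (a + k) + c * u a - (l + c * l)) (c * (u a - l))
      rw [← e3, abs_mul, abs_of_nonneg hc0] at e4
      have e5 : c * |u a - l| ≤ 1 / 2 * x := by gcongr
      have : C * (3 / 4) ^ (m + 1) = 3 / 4 * x := by rw [hxd]; ring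
      rw [this]
      linarith
  rw [Metric.tendsto_atTop]
  intro ε hε
  have : Tendsto (fun m : ℕ => C * (3 / 4 : ℝ) ^ m) atTop (𝓝 (C * 0)) :=
    (tendsto_pow_atTop_nhds_zero_of_lt_one (by norm_num) (by norm_num)).const_mul C
  rw [mul_zero] at this
  obtain ⟨m, hm⟩ := (this.eventually (gt_mem_nhds hε)).exists
  obtain ⟨N, hN⟩ := eventually_atTop.1 (key m)
  exact ⟨N, fun n hn => by rw [Real.dist_eq]; exact (hN n hn).trans_lt hm⟩

section cnt
variable (F : Type*) [Field F] [Fintype F]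

lemma mon_finite (n : ℕ) : {f : F[X] | f.Monic ∧ f.natDegree = n}.Finite := by
  have : Finite {f : F[X] // f.Monic ∧ f.natDegree = n} :=
    Finite.of_equiv _ ((monicEquivDegreeLT n).trans (degreeLTEquiv F n).toEquiv).symm
  exact this

noncomputable def mon (n : ℕ) : Finset F[X] := (mon_finite F n).toFinset

variable {F} in
lemma mem_mon {n : ℕ} {f : F[X]} : f ∈ mon F n ↔ f.Monic ∧ f.natDegree = n := by
  simp [mon]

lemma card_mon (n : ℕ) : (mon F n).card = Fintype.card F ^ n := by
  have h : Nat.card {f : F[X] // f.Monic ∧ f.natDegree = n} = (mon F n).card := by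
    rw [← Set.ncard_coe_finset, mon, Set.Finite.coe_toFinset]
    rfl
  rw [← h, Nat.card_congr ((monicEquivDegreeLT n).trans (degreeLTEquiv F n).toEquiv)]
  simp

noncomputable def DD (T S : Finset F[X]) (n : ℕ) : Finset F[X] :=
  (mon F n).filter fun f => Squarefree f ∧ (∀ p ∈ T, p ∣ f) ∧ ∀ p ∈ S, ¬ p ∣ f

variable {F} in
lemma mem_DD {T S : Finset F[X]} {n : ℕ} {f : F[X]} : f ∈ DD F T S n ↔
    (f.Monic ∧ f.natDegree = n) ∧ Squarefree f ∧ (∀ p ∈ T, p ∣ f) ∧ ∀ p ∈ S, ¬ p ∣ f := by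
  simp [DD, mem_mon]

lemma DD_split (T S : Finset F[X]) (p : F[X]) (n : ℕ) :
    (DD F T S n).card = (DD F (insert p T) S n).card + (DD F T (insert p S) n).card := by
  rw [← Finset.card_filter_add_card_filter_not (s := DD F T S n) (p ∣ ·)]
  congr 2 <;>
  · ext f
    simp only [Finset.mem_filter, mem_DD, Finset.forall_mem_insert]
    tauto

variable {F} in
lemma not_dvd_of_ne {p r : F[X]} (hp : p.Monic) (hpi : Irreducible p) (hr : r.Monic)
    (hri : Irreducible r) (h : p ≠ r) : ¬ p ∣ r := fun hd =>
  h (eq_of_monic_of_associated hp hr (hpi.associated_of_dvd hri hd))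

lemma DD_shift (T S : Finset F[X]) (k : ℕ) (hT : ∀ p ∈ T, p.Monic ∧ Irreducible p)
    (hS : ∀ p ∈ S, p.Monic ∧ Irreducible p) (p : F[X]) (hp : p.Monic) (hpi : Irreducible p)
    (hpk : p.natDegree = k) (hpT : p ∉ T) (hpS : p ∉ S) (n : ℕ) :
    (DD F T (insert p S) n).card = (DD F (insert p T) S (n + k)).card := by
  refine Finset.card_bij (fun g _ => p * g) ?_ ?_ ?_
  · intro g hg
    simp only [mem_DD, Finset.forall_mem_insert] at hg ⊢
    obtain ⟨⟨h1, h2⟩, h3, h4, h5, h6⟩ := hg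
    refine ⟨⟨hp.mul h1, by rw [hp.natDegree_mul h1, hpk, h2, add_comm]⟩, ?_, 
      ⟨dvd_mul_right _ _, fun t ht => (h4 t ht).mul_left _⟩, fun s hs hd => ?_⟩
    · rw [squarefree_mul_iff]
      exact ⟨hpi.isRelPrime_iff_not_dvd.2 h5, hpi.squarefree, h3⟩
    · rcases (hS s hs).2.prime.dvd_or_dvd hd with h | h
      · exact not_dvd_of_ne (hS s hs).1 (hS s hs).2 hp hpi (by rintro rfl; exact hpS hs) h
      · exact h6 s hs h
  · intro a _ b _ h
    exact mul_left_cancel₀ hp.ne_zero h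
  · intro f hf
    simp only [mem_DD, Finset.forall_mem_insert] at hf
    obtain ⟨⟨h1, h2⟩, h3, ⟨⟨g, rfl⟩, h4⟩, h6⟩ := hf
    have hg : g.Monic := hp.of_mul_monic_left h1
    refine ⟨g, ?_, rfl⟩
    simp only [mem_DD, Finset.forall_mem_insert]
    rw [squarefree_mul_iff] at h3
    rw [hp.natDegree_mul hg] at h2
    refine ⟨⟨hg, by omega⟩, h3.2.2, fun t ht => ?_, hpi.isRelPrime_iff_not_dvd.1 h3.1, 
      fun s hs hd => h6 s hs (hd.mul_left _)⟩
    refine ((hT t ht).2.prime.dvd_or_dvd (h4 t ht)).resolve_left ?_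
    exact not_dvd_of_ne (hT t ht).1 (hT t ht).2 hp hpi (by rintro rfl; exact hpT ht)

variable {F} in
lemma exists_decomp (n : ℕ) : ∀ f : F[X], f.Monic → f.natDegree = n →
    ∃ g h : F[X], g.Monic ∧ h.Monic ∧ Squarefree h ∧ f = g * g * h := by
  induction n using Nat.strong_induction_on with
  | _ n ih =>
  intro f hf hn
  by_cases hs : Squarefree f
  · exact ⟨1, f, monic_one, hf, hs, by simp⟩
  · simp only [Squarefree, not_forall] at hs
    obtain ⟨x, hx, hxu⟩ := hs
    have hx0 : x ≠ 0 := by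
      rintro rfl
      exact hf.ne_zero (by simpa using hx)
    have hyx : Associated (normalize x) x := normalize_associated x
    set y := normalize x with hy
    have hym : y.Monic := monic_normalize hx0
    have hyd : y * y ∣ f := (mul_dvd_mul hyx.dvd hyx.dvd).trans hx
    obtain ⟨r, rfl⟩ := hyd
    have hr : r.Monic := (hym.mul hym).of_mul_monic_left hf
    have hydeg : y.natDegree ≠ 0 := fun h0 => 
      hxu (hyx.isUnit (by rw [hym.natDegree_eq_zero.1 h0]; exact isUnit_one))
    rw [(hym.mul hym).natDegree_mul hr, hym.natDegree_mul hym] at hn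
    obtain ⟨g, h, hg, hh, hhs, rfl⟩ := ih r.natDegree (by omega) r hr rfl
    exact ⟨y * g, h, hym.mul hg, hh, hhs, by ring⟩

variable {F} in
lemma decomp_unique {g h g' h' : F[X]} (hg : g.Monic) (hh : Squarefree h) (hg' : g'.Monic)
    (hh' : Squarefree h') (e : g * g * h = g' * g' * h') : g = g' := by
  have key : ∀ {g h g' h' : F[X]}, g.Monic → g'.Monic → Squarefree h' → 
      g * g * h = g' * g' * h' → g ∣ g' := by
    intro g h g' h' hg hg' hh' e
    let _ : GCDMonoid F[X] := UniqueFactorizationMonoid.toGCDMonoid F[X]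
    obtain ⟨a, b, d2, d3, d1⟩ := _root_.extract_gcd g g'
    have hd : gcd g g' ≠ 0 := fun h0 => hg.ne_zero (by rw [d2, h0, zero_mul])
    generalize gcd g g' = d at *
    have e2 : a * a * h = b * b * h' := by
      refine mul_left_cancel₀ (mul_ne_zero hd hd) ?_
      rw [d2, d3] at e
      linear_combination e
    have hrel : IsRelPrime (a * a) (b * b) := by
      have h0 : IsRelPrime a b := (gcd_isUnit_iff_isRelPrime).1 d1
      exact (h0.mul_left h0).mul_right (h0.mul_left h0)
    have : a * a ∣ h' := hrel.dvd_of_dvd_mul_left ⟨h, e2.symm⟩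
    have hu := hh' a this
    rw [d2, d3]
    exact mul_dvd_mul_left _ hu.dvd
  exact eq_of_monic_of_associated hg hg'
    (associated_of_dvd_dvd (key hg hg' hh' e) (key hg' hg hh e.symm))

lemma sum_sf (n : ℕ) : Fintype.card F ^ n =
    ∑ i ∈ Finset.range (n / 2 + 1), Fintype.card F ^ i * (DD F ∅ ∅ (n - 2 * i)).card := by
  have : ((Finset.range (n / 2 + 1)).sigma fun i => mon F i ×ˢ DD F ∅ ∅ (n - 2 * i)).card =
      (mon F n).card := by
    refine Finset.card_bij (fun x _ => x.2.1 * x.2.1 * x.2.2) ?_ ?_ ?_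
    · rintro ⟨i, g, h⟩ hx
      simp only [Finset.mem_sigma, Finset.mem_range, Finset.mem_product, mem_mon, mem_DD] at hx ⊢
      obtain ⟨hi, ⟨hg, hgi⟩, ⟨hh, hhd⟩, -⟩ := hx
      refine ⟨(hg.mul hg).mul hh, ?_⟩
      rw [(hg.mul hg).natDegree_mul hh, hg.natDegree_mul hg]
      omega
    · rintro ⟨i, g, h⟩ hx ⟨i', g', h'⟩ hx' e
      simp only [Finset.mem_sigma, Finset.mem_range, Finset.mem_product, mem_mon, mem_DD] at hx hx' e
      obtain ⟨hi, ⟨hg, rfl⟩, ⟨hh, hhd⟩, hs, -⟩ := hx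
      obtain ⟨hi', ⟨hg', rfl⟩, ⟨hh', hhd'⟩, hs', -⟩ := hx'
      obtain rfl := decomp_unique hg hs hg' hs' e
      obtain rfl := mul_left_cancel₀ (hg.mul hg).ne_zero e
      rfl
    · intro f hf
      rw [mem_mon] at hf
      obtain ⟨g, h, hg, hh, hs, rfl⟩ := exists_decomp n f hf.1 hf.2
      have hd := hf.2
      rw [(hg.mul hg).natDegree_mul hh, hg.natDegree_mul hg] at hd
      refine ⟨⟨g.natDegree, g, h⟩, ?_, rfl⟩
      simp only [Finset.mem_sigma, Finset.mem_range, Finset.mem_product, mem_mon, mem_DD]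
      refine ⟨by omega, ⟨hg, trivial⟩, ⟨hh, by omega⟩, hs, by simp⟩
  rw [← card_mon, ← this, Finset.card_sigma]
  simp [card_mon]

lemma sf_count (n : ℕ) : Fintype.card F ^ (n + 2) =
    Fintype.card F ^ (n + 1) + (DD F ∅ ∅ (n + 2)).card := by
  conv_lhs => rw [sum_sf]
  rw [show (n + 2) / 2 + 1 = (n / 2 + 1) + 1 by omega, Finset.sum_range_succ', pow_succ',
    sum_sf F n, Finset.mul_sum]
  simp only [pow_zero, one_mul, mul_zero, Nat.sub_zero, add_left_inj]
  refine Finset.sum_congr rfl fun i hi => ?_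
  rw [show n + 2 - 2 * (i + 1) = n - 2 * i by omega]
  ring

lemma D0_tendsto : Tendsto (fun n => ((DD F ∅ ∅ n).card : ℝ) / (Fintype.card F : ℝ) ^ n) atTop
    (𝓝 (1 - 1 / (Fintype.card F : ℝ))) := by
  refine tendsto_const_nhds.congr' ?_
  filter_upwards [eventually_ge_atTop 2] with n hn
  obtain ⟨m, rfl⟩ : ∃ m, n = m + 2 := ⟨n - 2, by omega⟩
  have h := sf_count F m
  have hq : (Fintype.card F : ℝ) ≠ 0 := by simp
  have h' : (Fintype.card F : ℝ) ^ (m + 2) = 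
    (Fintype.card F : ℝ) ^ (m + 1) + (DD F ∅ ∅ (m + 2)).card := by exact_mod_cast h
  field_simp
  rw [pow_succ] at h'
  linear_combination (Fintype.card F : ℝ) * h'

lemma DS_tendsto (k : ℕ) (hk : 1 ≤ k) (S : Finset F[X])
    (hS : ∀ p ∈ S, p.Monic ∧ Irreducible p ∧ p.natDegree = k) :
    Tendsto (fun n => ((DD F ∅ S n).card : ℝ) / (Fintype.card F : ℝ) ^ n) atTop
    (𝓝 ((1 - 1 / (Fintype.card F : ℝ)) / (1 + 1 / (Fintype.card F : ℝ) ^ k) ^ S.card)) := by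
  have hq : (2 : ℝ) ≤ Fintype.card F := by exact_mod_cast Fintype.one_lt_card
  induction S using Finset.induction_on with
  | empty => simpa using D0_tendsto F
  | insert p S hpS ih =>
    rw [Finset.forall_mem_insert] at hS
    have ih := ih hS.2
    rw [Finset.card_insert_of_notMem hpS, pow_succ, ← div_div]
    refine rec_tendsto _ _ _ 1 k (by positivity) ?_ ?_ ?_
    · have : (2 : ℝ) ≤ (Fintype.card F : ℝ) ^ k := 
        hq.trans (le_self_pow₀ (by linarith) (by omega))
      exact one_div_le_one_div_of_le (by norm_num) this
    · intro n
      rw [abs_of_nonneg (by positivity), div_le_one (by positivity)]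
      have : (DD F ∅ (insert p S) n).card ≤ (mon F n).card := Finset.card_filter_le _ _
      rw [card_mon] at this
      exact_mod_cast this
    · refine (ih.comp (tendsto_add_atTop_nat k)).congr fun n => ?_
      simp only [Function.comp]
      rw [DD_split F ∅ S p (n + k), ← DD_shift F ∅ S k (by simp) 
        (fun p hp => ⟨(hS.2 p hp).1, (hS.2 p hp).2.1⟩) p hS.1.1 hS.1.2.1 hS.1.2.2 (by simp) hpS n]
      have : (Fintype.card F : ℝ) ≠ 0 := by positivity
      push_cast
      rw [pow_add]
      field_simp
      ring

lemma DT_tendsto (k : ℕ) (hk : 1 ≤ k) (T : Finset F[X])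
    (hT : ∀ p ∈ T, p.Monic ∧ Irreducible p ∧ p.natDegree = k) : ∀ (S : Finset F[X])
    (_ : ∀ p ∈ S, p.Monic ∧ Irreducible p ∧ p.natDegree = k) (_ : Disjoint T S),
    Tendsto (fun n => ((DD F T S n).card : ℝ) / (Fintype.card F : ℝ) ^ n) atTop
    (𝓝 ((1 - 1 / (Fintype.card F : ℝ)) / (1 + 1 / (Fintype.card F : ℝ) ^ k) ^ (T.card + S.card) *
      (1 / (Fintype.card F : ℝ) ^ k) ^ T.card)) := by
  induction T using Finset.induction_on with
  | empty =>
    intro S hS _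
    simpa using DS_tendsto F k hk S hS
  | insert p T hpT ih =>
    intro S hS hd
    rw [Finset.forall_mem_insert] at hT
    rw [Finset.disjoint_insert_left] at hd
    have ih := ih hT.2 (insert p S) (by rw [Finset.forall_mem_insert]; exact ⟨hT.1, hS⟩)
      (by rw [Finset.disjoint_insert_right]; exact ⟨hpT, hd.2⟩)
    rw [Finset.card_insert_of_notMem hd.1] at ih
    rw [Finset.card_insert_of_notMem hpT, pow_succ _ T.card, ← mul_assoc, add_right_comm, add_assoc]
    rw [← tendsto_add_atTop_iff_nat k]
    refine (ih.mul_const _).congr fun n => ?_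
    rw [DD_shift F T S k (fun p hp => ⟨(hT.2 p hp).1, (hT.2 p hp).2.1⟩)
        (fun p hp => ⟨(hS p hp).1, (hS p hp).2.1⟩) p hT.1.1 hT.1.2.1 hT.1.2.2 hpT hd.1 n, pow_add]
    field_simp

noncomputable def PP (k : ℕ) : Finset F[X] := (mon F k).filter Irreducible

variable {F} in
lemma Xdeg_eq (f : F[X]) (hf : f.Monic) (hs : Squarefree f) (k : ℕ) :
    Xdeg f k = ((PP F k).filter (· ∣ f)).card := by
  have hnd := (UniqueFactorizationMonoid.squarefree_iff_nodup_normalizedFactors hf.ne_zero).1 hs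
  unfold Xdeg
  rw [← Multiset.toFinset_card_of_nodup (hnd.filter _)]
  congr 1
  ext p
  simp only [Multiset.mem_toFinset, Multiset.mem_filter, Finset.mem_filter, PP, mem_mon,
    Polynomial.mem_normalizedFactors_iff hf.ne_zero]
  tauto

lemma sum_choose (k j n : ℕ) : ∑ f ∈ DD F ∅ ∅ n, ((Xdeg f k).choose j : ℝ) =
    ∑ T ∈ (PP F k).powersetCard j, ((DD F T ∅ n).card : ℝ) := by
  have h1 : ∀ f ∈ DD F ∅ ∅ n, ((Xdeg f k).choose j : ℝ) = 
      ∑ T ∈ (PP F k).powersetCard j, if ∀ p ∈ T, p ∣ f then (1 : ℝ) else 0 := by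
    intro f hf
    rw [mem_DD] at hf
    rw [Xdeg_eq f hf.1.1 hf.2.1, ← Finset.card_powersetCard, ← Finset.sum_filter,
      Finset.sum_const, nsmul_one]
    congr 2
    ext T
    simp only [Finset.mem_powersetCard, Finset.mem_filter, Finset.subset_iff]
    grind
  rw [Finset.sum_congr rfl h1, Finset.sum_comm]
  refine Finset.sum_congr rfl fun T _ => ?_
  rw [← Finset.sum_filter, Finset.sum_const, nsmul_one]
  congr 2
  ext f
  simp only [Finset.mem_filter, mem_DD]
  simp [and_assoc]

end cnt

/-- Over a finite field with `q` elements, for a uniformly random monic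
squarefree polynomial `f` of degree `n`,
`lim_{n→∞} E[binom(X_k(f), j)] = binom(M k, j) ⬝ (1/(1+q^k))^j`, where `X_k(f)` is the
number of degree-`k` irreducible factors of `f` and `M k` is the number of monic
irreducible polynomials of degree `k`. -/
theorem stmt10 (F : Type*) [Field F] [Fintype F] (q : ℕ) (hq : Fintype.card F = q)
    (k : ℕ) (hk : 1 ≤ k) (j : ℕ) (M : ℕ → ℕ)
    (hM : ∀ k, M k = Nat.card {f : Polynomial F // f.Monic ∧ Irreducible f ∧
      f.natDegree = k}) :
    Tendsto
      (fun n : ℕ =>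
        (∑ᶠ f ∈ {f : Polynomial F | f.Monic ∧ Squarefree f ∧ f.natDegree = n},
            ((Xdeg f k).choose j : ℝ)) /
          (Nat.card {f : Polynomial F // f.Monic ∧ Squarefree f ∧ f.natDegree = n} : ℝ))
      atTop
      (𝓝 (((M k).choose j : ℝ) * (1 / (1 + (q : ℝ) ^ k)) ^ j)) := by
  subst hq
  have hq : (2 : ℝ) ≤ Fintype.card F := by exact_mod_cast Fintype.one_lt_card
  have hset : ∀ n, {f : Polynomial F | f.Monic ∧ Squarefree f ∧ f.natDegree = n} =
      ↑(DD F ∅ ∅ n) := by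
    intro n
    ext f
    simp only [Set.mem_ofPred_eq, Finset.mem_coe, mem_DD]
    simp
    tauto
  have hcard : ∀ n, Nat.card {f : Polynomial F // f.Monic ∧ Squarefree f ∧ f.natDegree = n} =
      (DD F ∅ ∅ n).card := by
    intro n
    rw [← Set.ncard_coe_finset, ← hset]
    rfl
  have hMk : M k = (PP F k).card := by
    rw [hM, ← Set.ncard_coe_finset]
    have : {f : Polynomial F | f.Monic ∧ Irreducible f ∧ f.natDegree = k} = ↑(PP F k) := by
      ext f
      simp only [Set.mem_ofPred_eq, Finset.mem_coe, PP, Finset.mem_filter, mem_mon]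
      tauto
    rw [← this]
    rfl
  have hnum : Tendsto (fun n => (∑ T ∈ (PP F k).powersetCard j, ((DD F T ∅ n).card : ℝ)) /
      (Fintype.card F : ℝ) ^ n) atTop (𝓝 (∑ T ∈ (PP F k).powersetCard j,
      ((1 - 1 / (Fintype.card F : ℝ)) / (1 + 1 / (Fintype.card F : ℝ) ^ k) ^ j *
      (1 / (Fintype.card F : ℝ) ^ k) ^ j))) := by
    simp only [Finset.sum_div]
    refine tendsto_finsetSum _ fun T hT => ?_
    rw [Finset.mem_powersetCard] at hT
    have := DT_tendsto F k hk T (fun p hp => by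
      have := hT.1 hp
      simp only [PP, Finset.mem_filter, mem_mon] at this
      tauto) ∅ (by simp) (by simp)
    simpa [hT.2] using this
  have hL : (1 - 1 / (Fintype.card F : ℝ)) ≠ 0 := by
    have : 1 / (Fintype.card F : ℝ) ≤ 1 / 2 := one_div_le_one_div_of_le (by norm_num) hq
    linarith
  have hfin := hnum.div (D0_tendsto F) hL
  have hlim : (∑ T ∈ (PP F k).powersetCard j,
      ((1 - 1 / (Fintype.card F : ℝ)) / (1 + 1 / (Fintype.card F : ℝ) ^ k) ^ j *
      (1 / (Fintype.card F : ℝ) ^ k) ^ j)) / (1 - 1 / (Fintype.card F : ℝ)) =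
      ((M k).choose j : ℝ) * (1 / (1 + (Fintype.card F : ℝ) ^ k)) ^ j := by
    rw [Finset.sum_const, Finset.card_powersetCard, nsmul_eq_mul, ← hMk]
    have hQ : (0 : ℝ) < (Fintype.card F : ℝ) ^ k := by positivity
    generalize (Fintype.card F : ℝ) ^ k = Q at hQ
    generalize (1 - 1 / (Fintype.card F : ℝ)) = L at hL
    have e : (1 / (1 + Q)) = 1 / (1 + 1 / Q) * (1 / Q) := by field_simp; ring
    rw [e, mul_pow, div_pow 1 (1 + 1 / Q), one_pow]
    field_simp
  rw [hlim] at hfin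
  refine hfin.congr fun n => ?_
  have hqn : (Fintype.card F : ℝ) ^ n ≠ 0 := by positivity
  rw [hcard, hset, finsum_mem_coe_finset, sum_choose]
  simp only [Pi.div_apply]
  rw [div_div_div_cancel_right₀ hqn]
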